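/- Let a, b, c be positive integers such that gcd(a,b) = 1, gcd(a,c) is a power of 2, and gcd(b,c) is a power of 2. Then the equation a·x + b·y = c·z² is 2-Ramsey. -/

import Mathlib

/-!
Put `x = M b T`, `y = M a S`, `z = M Z` with `M = 2ab(a + b)`. The equation becomes
`S + T = m Z ^ 2` with `m = 2(a + b)c`, and the colours to compare are those of `a S`, `b T`, `Z`
in the colouring `n ↦ φ (M n)`. Suppose that neither colour class has a solution with `Z` large.
Then both classes are infinite, so either class `A` has arbitrarily late gaps: `z ∈ A`, `n ∈ A` and
no element of `A` in between, with `n - z ≥ 2`.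

* If `n` is small compared with `z ^ 2`, compare two solutions with the same `S`. Passing from
  `Z = z ∈ A` to `Z = z + 1 ∉ A` shows that `b T ∈ A` implies `b (T + p) ∈ A`, where
  `p = m ((z + 1) ^ 2 - z ^ 2)`; passing from `Z = n ∈ A` to `Z = n - 1 ∉ A` shows that `b T ∈ A`
  implies `b (T - q) ∈ A`, where `q = m (n ^ 2 - (n - 1) ^ 2)`. On an interval of length `p + q` the
  two moves form a rotation modulo `p + q`. At `S₀`, `T₀` with `S₀ + T₀ = m z ^ 2` and
  `a S₀ = b T₀` we get `b T₀ ∉ A` and `b (T₀ + p) ∈ A`, which the rotation carries back to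
  `b T₀ ∈ A`.
* If `z ^ 2` is at most a constant times `n`, write `s ^ 2 + d ^ 2 = n ^ 2 + E` with `s`, `d`, and
  the relevant multiples of `E` all inside the gap. With `X = m E / 2`, the triples `(S, X, s)`
  and `(X, T, d)` force `a S ∈ A` and `b T ∈ A`, and then `S + T = m n ^ 2` is a solution in `A`.
-/

open Set

/-- The moves `r ↦ r + p` and `r ↦ r - q` together are the rotation by `p` modulo `p + q`, under
which the orbit of `p` contains `0`. -/
theorem pred_zero_of_rotation {p q : ℕ} (hq : 0 < q) {P : ℕ → Prop} (hP : P p)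
    (hadd : ∀ r < q, P r → P (r + p))
    (hsub : ∀ r, q ≤ r → r < p + q → P r → P (r - q)) : P 0 := by
  have step : ∀ r < p + q, P r → P ((r + p) % (p + q)) := by
    intro r hr hPr
    rcases lt_or_ge r q with hrq | hrq
    · rw [Nat.mod_eq_of_lt (by omega)]
      exact hadd r hrq hPr
    · rw [show r + p = r - q + (p + q) by omega, Nat.add_mod_right, Nat.mod_eq_of_lt (by omega)]
      exact hsub r hrq hr hPr
  have orbit : ∀ k, P ((k + 1) * p % (p + q)) := by
    intro k
    induction k with
    | zero => rwa [zero_add, one_mul, Nat.mod_eq_of_lt (by omega)]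
    | succ k ih =>
      have := step _ (Nat.mod_lt _ (by omega)) ih
      rwa [Nat.mod_add_mod, ← Nat.succ_mul] at this
  have := orbit (p + q - 1)
  rwa [Nat.sub_add_cancel (by omega), Nat.mul_mod_right] at this

theorem exists_next_mem {A : Set ℕ} (hA : A.Infinite) (x : ℕ) :
    ∃ n, x ≤ n ∧ n + 1 ∈ A ∧ ∀ t ∈ Ioc x n, t ∉ A := by
  classical
  have hex : ∃ n, x ≤ n ∧ n + 1 ∈ A := by
    obtain ⟨y, hy, hxy⟩ := hA.exists_gt x
    exact ⟨y - 1, by omega, by rwa [Nat.sub_add_cancel (by omega)]⟩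
  refine ⟨Nat.find hex, (Nat.find_spec hex).1, (Nat.find_spec hex).2, fun t ht htA => ?_⟩
  obtain ⟨hxt, htn⟩ := mem_Ioc.1 ht
  exact Nat.find_min hex (show t - 1 < Nat.find hex by omega)
    ⟨by omega, by rwa [Nat.sub_add_cancel (by omega)]⟩

theorem exists_gap_of_infinite {A : Set ℕ} (hA : A.Infinite) (hA' : Aᶜ.Infinite) (N : ℕ) :
    ∃ z w, N ≤ z ∧ z < w ∧ z ∈ A ∧ w + 1 ∈ A ∧ ∀ t ∈ Ioo z (w + 1), t ∉ A := by
  obtain ⟨x, hxA, hNx⟩ := hA.exists_gt N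
  obtain ⟨z, hxz, hz', hxzA⟩ := exists_next_mem hA' x
  obtain ⟨w, hzw, hw, hzwA⟩ := exists_next_mem hA (z + 1)
  have hz : z ∈ A := by
    rcases hxz.eq_or_lt with rfl | hlt
    · exact hxA
    · exact not_not.1 (hxzA z ⟨hlt, le_rfl⟩)
  refine ⟨z, w, by omega, by omega, hz, hw, fun t ⟨hzt, htw⟩ => ?_⟩
  rcases (Nat.succ_le_of_lt hzt).eq_or_lt with rfl | hlt
  · exact hz'
  · exact hzwA t ⟨hlt, by omega⟩

theorem mul_lt_of_sq_le_mul {C H X n : ℕ} (hX : X ^ 2 ≤ C * n) (hn : C * H ^ 2 < n) :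
    H * X < n := by
  refine lt_of_pow_lt_pow_left₀ 2 (Nat.zero_le n) ?_
  calc (H * X) ^ 2 = H ^ 2 * X ^ 2 := mul_pow H X 2
    _ ≤ H ^ 2 * (C * n) := Nat.mul_le_mul_left _ hX
    _ = C * H ^ 2 * n := by ring
    _ < n * n := Nat.mul_lt_mul_of_pos_right hn (by omega)
    _ = n ^ 2 := (sq n).symm

theorem exists_sq_add_sq_eq_sq_add {K H z n : ℕ} (hK : 0 < K) (hH : 0 < H) (hz : z ^ 2 ≤ K * n)
    (hn : 42 * K * H ^ 2 < n) :
    ∃ s ∈ Ioo z n, ∃ d ∈ Ioo z n, ∃ E, z < E ∧ H * E < n ∧ s ^ 2 + d ^ 2 = n ^ 2 + E := by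
  have hKn : K < n := by nlinarith [pow_pos hH 2]
  have hKK : K ^ 2 ≤ K * n := by rw [sq]; gcongr
  have hKn_pos : 0 < K * n := Nat.mul_pos hK (hK.trans hKn)
  -- `d = n - K`, and `s ^ 2` is the first square beyond `N = n ^ 2 - d ^ 2 + z`.
  obtain ⟨N, hN⟩ : ∃ N, N + K ^ 2 = 2 * K * n + z :=
    ⟨2 * K * n + z - K ^ 2, Nat.sub_add_cancel (by nlinarith)⟩
  obtain ⟨r, hrN, hNr⟩ : ∃ r, r ^ 2 ≤ N ∧ N < (r + 1) ^ 2 :=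
    ⟨N.sqrt, Nat.sqrt_le' N, Nat.lt_succ_sqrt' N⟩
  obtain ⟨E, hE⟩ : ∃ E, (r + 1) ^ 2 + K ^ 2 = 2 * K * n + E :=
    ⟨(r + 1) ^ 2 + K ^ 2 - 2 * K * n, by omega⟩
  have hr_sq : (r + 1) ^ 2 = r ^ 2 + 2 * r + 1 := by ring
  have hzs : z < r + 1 := lt_of_pow_lt_pow_left₀ 2 (Nat.zero_le _) (by nlinarith)
  have hKs : K < r + 1 := lt_of_pow_lt_pow_left₀ 2 (Nat.zero_le _) (by nlinarith)
  have hzE : z < E := by omega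
  have hE_le : E ≤ z + 2 * r + 1 := by omega
  have hbound_sq : (z + 2 * r + 1) ^ 2 ≤ 42 * K * n := by
    have hzz : z ≤ z ^ 2 := Nat.le_self_pow two_ne_zero z
    have hcauchy : (z + 2 * r + 1) ^ 2 ≤ 3 * (z ^ 2 + 4 * r ^ 2 + 1) := by
      zify
      nlinarith [sq_nonneg ((z : ℤ) - 2 * r), sq_nonneg ((z : ℤ) - 1), sq_nonneg (2 * (r : ℤ) - 1)]
    have hr_le : r ^ 2 ≤ 3 * (K * n) := by nlinarith
    linarith
  have hbound : H * (z + 2 * r + 1) < n := mul_lt_of_sq_le_mul hbound_sq hn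
  have hlt : z + 2 * r + 1 < n := (Nat.le_mul_of_pos_left _ hH).trans_lt hbound
  obtain ⟨d, rfl⟩ : ∃ d, n = d + K := ⟨n - K, by omega⟩
  exact ⟨r + 1, ⟨hzs, by omega⟩, d, ⟨by omega, by omega⟩, E, hzE,
    (Nat.mul_le_mul_left H hE_le).trans_lt hbound, by linarith [add_sq d K]⟩

/-- `A` contains no triple `a S`, `b T`, `Z` with `S + T = m Z ^ 2`, `S` and `T` positive and
`Z > B`. For `M` with `a b m = c M`, these are the triples for which `(M b T, M a S, M Z)` solves
`a x + b y = c z ^ 2`. -/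
def SolutionFree (a b m B : ℕ) (A : Set ℕ) : Prop :=
  ∀ ⦃S T Z : ℕ⦄, 0 < S → 0 < T → B < Z → S + T = m * Z ^ 2 → a * S ∈ A → b * T ∈ A → Z ∉ A

namespace SolutionFree

variable {a b m B : ℕ} {A : Set ℕ}

theorem mem_left_of_compl (hA' : SolutionFree a b m B Aᶜ) {S T Z : ℕ} (hS : 0 < S) (hT : 0 < T)
    (hZ : B < Z) (h : S + T = m * Z ^ 2) (hTA : b * T ∉ A) (hZA : Z ∉ A) : a * S ∈ A :=
  by_contra fun hSA => hA' hS hT hZ h hSA hTA hZA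

theorem mem_right_of_compl (hA' : SolutionFree a b m B Aᶜ) {S T Z : ℕ} (hS : 0 < S) (hT : 0 < T)
    (hZ : B < Z) (h : S + T = m * Z ^ 2) (hSA : a * S ∉ A) (hZA : Z ∉ A) : b * T ∈ A :=
  by_contra fun hTA => hA' hS hT hZ h hSA hTA hZA

theorem mem_right_of_mem_right (hA : SolutionFree a b m B A) (hA' : SolutionFree a b m B Aᶜ)
    {S T T' x y : ℕ} (hS : 0 < S) (hT : 0 < T) (hT' : 0 < T') (hx : B < x) (hy : B < y)
    (hSx : S + T = m * x ^ 2) (hSy : S + T' = m * y ^ 2) (hxA : x ∈ A) (hyA : y ∉ A)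
    (hTA : b * T ∈ A) : b * T' ∈ A :=
  hA'.mem_right_of_compl hS hT' hy hSy (fun hSA => hA hS hT hx hSx hSA hTA hxA) hyA

theorem infinite_compl (ha : 0 < a) (hb : 0 < b) (hm : 0 < m) (hA : SolutionFree a b m B A) :
    Aᶜ.Infinite := by
  refine infinite_of_forall_exists_gt fun N => ?_
  by_contra! hmem
  have hNA : ∀ t, N < t → t ∈ A := fun t ht => not_not.1 fun htA => (hmem t htA).not_gt ht
  obtain ⟨Z, hNZ, hBZ, hZ⟩ : ∃ Z, N < Z ∧ B < Z ∧ 2 ≤ Z :=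
    ⟨N + B + 2, by omega, by omega, by omega⟩
  obtain ⟨T, hT⟩ : ∃ T, m * Z ^ 2 = Z + Z + T :=
    Nat.exists_eq_add_of_le (by nlinarith [Nat.le_mul_of_pos_left (Z ^ 2) hm])
  exact hA (S := Z) (T := Z + T) (by omega) (by omega) hBZ (by omega)
    (hNA _ (hNZ.trans_le (Nat.le_mul_of_pos_left Z ha)))
    (hNA _ ((Nat.lt_add_right T hNZ).trans_le (Nat.le_mul_of_pos_left _ hb))) (hNA Z hNZ)

theorem lt_add_of_changes (hA : SolutionFree a b m B A) (hA' : SolutionFree a b m B Aᶜ)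
    {S T p q x x' y y' : ℕ} (hS : 0 < S) (hT : 0 < T) (hq : 0 < q) (hBx : B < x) (hBx' : B < x')
    (hBy : B < y) (hBy' : B < y') (heq : a * S = b * T) (hST : S + T = m * x ^ 2)
    (hp_eq : m * x' ^ 2 = m * x ^ 2 + p) (hq_eq : m * y' ^ 2 = m * y ^ 2 + q)
    (hxy : m * x ^ 2 ≤ m * y ^ 2) (hx : x ∈ A) (hx' : x' ∉ A) (hy : y ∉ A) (hy' : y' ∈ A) :
    S < p + q := by
  by_contra! hpq
  have hTA : b * T ∉ A := fun hmem => hA hS hT hBx hST (heq ▸ hmem) hmem hx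
  have hstart : b * (T + p) ∈ A :=
    hA'.mem_right_of_compl hS (by omega) hBx' (by omega) (heq ▸ hTA) hx'
  refine hTA (pred_zero_of_rotation (P := fun r => b * (T + r) ∈ A) hq hstart ?_ ?_)
  · intro r hr
    exact hA.mem_right_of_mem_right hA' (S := m * x ^ 2 - (T + r)) (by omega) (by omega)
      (by omega) hBx hBx' (by omega) (by omega) hx hx'
  · intro r hqr hr
    exact hA.mem_right_of_mem_right hA' (S := m * y' ^ 2 - (T + r)) (by omega) (by omega)
      (by omega) hBy' hBy (by omega) (by omega) hy' hy

theorem sq_lt_of_changes (ha : 0 < a) (hb : 0 < b) (hm : 0 < m) (hdvd : a + b ∣ m)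
    (hA : SolutionFree a b m B A) (hA' : SolutionFree a b m B Aᶜ) {z w : ℕ} (hBz : B < z)
    (hzw : z < w) (hz : z ∈ A) (hz' : z + 1 ∉ A) (hw : w ∉ A) (hw' : w + 1 ∈ A) :
    z ^ 2 < 4 * (a + b) * (w + 1) := by
  obtain ⟨k, rfl⟩ := hdvd
  have hk : 0 < k := Nat.pos_of_mul_pos_left hm
  have hz_pos : 0 < z := by omega
  have hlt : b * k * z ^ 2 < (a + b) * k * (2 * z + 1) + (a + b) * k * (2 * w + 1) :=
    hA.lt_add_of_changes hA' (T := a * k * z ^ 2) (x := z) (x' := z + 1) (y := w) (y' := w + 1)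
      (by positivity) (by positivity) (by positivity) hBz (by omega) (by omega) (by omega)
      (by ring) (by ring) (by ring) (by ring) (by gcongr) hz hz' hw hw'
  refine Nat.lt_of_mul_lt_mul_left (a := k) ?_
  calc k * z ^ 2 ≤ b * (k * z ^ 2) := Nat.le_mul_of_pos_left _ hb
    _ = b * k * z ^ 2 := (mul_assoc b k _).symm
    _ < (a + b) * k * (2 * z + 1) + (a + b) * k * (2 * w + 1) := hlt
    _ = (a + b) * k * (2 * z + 2 * w + 2) := by ring
    _ ≤ (a + b) * k * (4 * (w + 1)) := Nat.mul_le_mul_left _ (by omega)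
    _ = k * (4 * (a + b) * (w + 1)) := by ring

theorem mul_lt_sq_of_gap (ha : 0 < a) (hb : 0 < b) (hm : 0 < m) (heven : 2 ∣ m)
    (hA : SolutionFree a b m B A) (hA' : SolutionFree a b m B Aᶜ) {K z n : ℕ} (hK : 0 < K)
    (hBz : B ≤ z) (hn : 42 * K * ((a + b) * m) ^ 2 < n) (hnA : n ∈ A)
    (hgap : ∀ t ∈ Ioo z n, t ∉ A) : K * n < z ^ 2 := by
  by_contra! hlong
  obtain ⟨s, hs, d, hd, E, hzE, hEn, hsum⟩ :=
    exists_sq_add_sq_eq_sq_add hK (by positivity) hlong hn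
  obtain ⟨l, rfl⟩ := heven
  have hl : 0 < l := by omega
  obtain ⟨X, hX⟩ : ∃ X, X = l * E := ⟨_, rfl⟩
  have hEX : E ≤ X := hX ▸ Nat.le_mul_of_pos_left E hl
  have hXn : (a + b) * X < n := by
    refine lt_of_le_of_lt ?_ hEn
    rw [hX, ← mul_assoc]
    gcongr
    omega
  have hmul_X : ∀ k, 0 < k → k ≤ a + b → k * X ∉ A := fun k hk hkab =>
    hgap _ ⟨by nlinarith, (Nat.mul_le_mul_right X hkab).trans_lt hXn⟩
  have hX_lt : ∀ t u, u ∈ Ioo z n → t ^ 2 + u ^ 2 = n ^ 2 + E → X < 2 * l * t ^ 2 := by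
    intro t u hu htu
    have hu_sq : u ^ 2 ≤ n ^ 2 := Nat.pow_le_pow_left hu.2.le 2
    rw [hX]
    nlinarith
  obtain ⟨S, hS⟩ := Nat.exists_eq_add_of_lt (hX_lt s d hd hsum)
  obtain ⟨T, hT⟩ := Nat.exists_eq_add_of_lt (hX_lt d s hs (by omega))
  have hSA : a * (S + 1) ∈ A := hA'.mem_left_of_compl S.succ_pos (by omega)
    (hBz.trans_lt hs.1) (by omega) (hmul_X b hb (by omega)) (hgap s hs)
  have hTA : b * (T + 1) ∈ A := hA'.mem_right_of_compl (by omega) T.succ_pos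
    (hBz.trans_lt hd.1) (by omega) (hmul_X a ha (by omega)) (hgap d hd)
  have hST : (S + 1) + (T + 1) = 2 * l * n ^ 2 := by
    have : 2 * l * s ^ 2 + 2 * l * d ^ 2 = 2 * l * n ^ 2 + 2 * X := by
      rw [← mul_add, hsum, hX]; ring
    omega
  exact hA S.succ_pos T.succ_pos (by linarith [hs.1, hs.2]) hST hSA hTA hnA

end SolutionFree

theorem not_solutionFree_compl {a b m B : ℕ} {A : Set ℕ} (ha : 0 < a) (hb : 0 < b)
    (hm : 0 < m) (hdvd : a + b ∣ m) (heven : 2 ∣ m) (hA : SolutionFree a b m B A) :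
    ¬ SolutionFree a b m B Aᶜ := by
  intro hA'
  have hA_inf : A.Infinite := compl_compl A ▸ hA'.infinite_compl ha hb hm
  obtain ⟨z, w, hNz, hzw, hz, hw, hgap⟩ := exists_gap_of_infinite hA_inf
    (hA.infinite_compl ha hb hm) (B + 1 + 42 * (4 * (a + b)) * ((a + b) * m) ^ 2)
  have hlt : z ^ 2 < 4 * (a + b) * (w + 1) :=
    hA.sq_lt_of_changes ha hb hm hdvd hA' (by omega) hzw hz (hgap _ ⟨by omega, by omega⟩)
      (hgap _ ⟨hzw, by omega⟩) hw
  have hgt : 4 * (a + b) * (w + 1) < z ^ 2 :=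
    hA.mul_lt_sq_of_gap ha hb hm heven hA' (by omega) (by omega) (by omega) hw hgap
  exact lt_asymm hlt hgt

theorem solutionFree_colorClass {κ : Type*} {φ : ℕ → κ} {a b c m M B : ℕ} (ha : 0 < a) (hb : 0 < b)
    (hM : 0 < M) (hmM : a * b * m = c * M)
    (hB : ∀ x y z, 0 < x → 0 < y → 0 < z → φ x = φ y → φ x = φ z → a * x + b * y = c * z ^ 2 →
      z ≤ B) (i : κ) : SolutionFree a b m B {n | φ (M * n) = i} := by
  intro S T Z hS hT hZ hST hSi hTi hZi
  have hZpos : 0 < Z := by omega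
  have hsol : a * (M * (b * T)) + b * (M * (a * S)) = c * (M * Z) ^ 2 := by
    calc a * (M * (b * T)) + b * (M * (a * S)) = M * (a * b) * (S + T) := by ring
      _ = M * (a * b * m) * Z ^ 2 := by rw [hST]; ring
      _ = c * (M * Z) ^ 2 := by rw [hmM]; ring
  have hMZ : M * Z ≤ B := hB _ _ _ (by positivity) (by positivity) (by positivity)
    (hTi.trans hSi.symm) (hTi.trans hZi.symm) hsol
  exact (hZ.trans_le (Nat.le_mul_of_pos_left Z hM)).not_ge hMZ

theorem stmt_4_general (a b c : ℕ) (ha : 0 < a) (hb : 0 < b) (hc : 0 < c) :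
    ∀ φ : ℕ → Fin 2,
      {w : ℕ × ℕ × ℕ | 0 < w.1 ∧ 0 < w.2.1 ∧ 0 < w.2.2 ∧
        φ w.1 = φ w.2.1 ∧ φ w.1 = φ w.2.2 ∧
        a * w.1 + b * w.2.1 = c * w.2.2 ^ 2}.Infinite := by
  intro φ hfin
  obtain ⟨B, hB⟩ := (hfin.image fun w => w.2.2).bddAbove
  have hfree : ∀ i, SolutionFree a b (2 * (a + b) * c) B {n | φ (2 * a * b * (a + b) * n) = i} :=
    solutionFree_colorClass ha hb (by positivity) (by ring)
      fun x y z hx hy hz hxy hxz h => hB ⟨(x, y, z), ⟨hx, hy, hz, hxy, hxz, h⟩, rfl⟩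
  have hcompl : {n | φ (2 * a * b * (a + b) * n) = 0}ᶜ = {n | φ (2 * a * b * (a + b) * n) = 1} := by
    ext n
    simp only [mem_compl_iff, mem_ofPred_eq]
    omega
  refine not_solutionFree_compl ha hb (by positivity) ⟨2 * c, by ring⟩ ⟨(a + b) * c, by ring⟩
    (hfree 0) ?_
  exact hcompl ▸ hfree 1

/-- Let `a, b, c` be positive integers such that `gcd(a,b) = 1`, `gcd(a,c)` is a
power of 2, and `gcd(b,c)` is a power of 2. Then the equation `a·x + b·y = c·z²` is 2-Ramsey. -/
theorem stmt_4 (a b c : ℕ) (ha : 0 < a) (hb : 0 < b) (hc : 0 < c)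
    (hab : Nat.gcd a b = 1)
    (hac : ∃ ℓ : ℕ, Nat.gcd a c = 2 ^ ℓ) (hbc : ∃ ℓ' : ℕ, Nat.gcd b c = 2 ^ ℓ') :
    ∀ φ : ℕ → Fin 2,
      {w : ℕ × ℕ × ℕ | 0 < w.1 ∧ 0 < w.2.1 ∧ 0 < w.2.2 ∧
        φ w.1 = φ w.2.1 ∧ φ w.1 = φ w.2.2 ∧
        a * w.1 + b * w.2.1 = c * w.2.2 ^ 2}.Infinite :=
  stmt_4_general a b c ha hb hc
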